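/- arXiv:2307.15512 — 3 statements merged into one kernel-verified Lean document; each statement's English description precedes it below -/
import Mathlib

section
/- Let k = k(n) ≥ 2 and p = p(n) > 0 be sequences such that d̂/k = ω(log³ n), k = ω(log n), and d̂ ≤ n, where d̂ = p·k·C(n−1,k−1). Then with high probability (probability tending to 1 as n → ∞) the random hypergraph G = G^k(n,p) satisfies: for every subset A ⊆ [n], 2^{-16}·min(|A|·d̂, n) ≤ |N_V^1(A)| ≤ 2^{12}·|A|·d̂. -/
open scoped BigOperators

/-- A `k`-uniform hypergraph on vertex set `Fin n`. -/
structure KGraph (n k : ℕ) where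
  edges : Finset (Finset (Fin n))
  uniform : ∀ e ∈ edges, e.card = k

namespace KGraph

variable {n k : ℕ}

/-- A loose path of edges from `x` to `y`: a nonempty list of edges, the first containing `x`,
the last containing `y`, with consecutive edges intersecting. -/
def IsLoosePath (G : KGraph n k) (x y : Fin n) (l : List (Finset (Fin n))) : Prop :=
  l ≠ [] ∧ (∀ e ∈ l, e ∈ G.edges) ∧ (∀ e ∈ l.head?, x ∈ e) ∧
    (∀ e ∈ l.getLast?, y ∈ e) ∧ l.Chain' (fun e f => (e ∩ f).Nonempty)

/-- Distance between two vertices: the smallest length of a loose path between them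
(`0` if they are equal, `⊤` if there is no such path). -/
noncomputable def dist (G : KGraph n k) (x y : Fin n) : ℕ∞ :=
  if x = y then 0
  else sInf ((fun l : List (Finset (Fin n)) => (l.length : ℕ∞)) '' {l | G.IsLoosePath x y l})

/-- Distance between two sets of vertices: the minimum over pairs. -/
noncomputable def setDist (G : KGraph n k) (A B : Set (Fin n)) : ℕ∞ :=
  ⨅ (x ∈ A) (y ∈ B), G.dist x y

/-- The closed `r`-th vertex-neighbourhood of a set of vertices. -/
noncomputable def vNhd (G : KGraph n k) (A : Set (Fin n)) (r : ℕ) : Set (Fin n) :=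
  {v | G.setDist A {v} ≤ (r : ℕ∞)}

/-- The set of vertices covered by a set of edges. -/
def VB (B : Set (Finset (Fin n))) : Set (Fin n) :=
  ⋃ e ∈ B, (e : Set (Fin n))

/-- The closed `r`-th vertex-neighbourhood of a set of edges. -/
noncomputable def vNhdE (G : KGraph n k) (B : Set (Finset (Fin n))) (r : ℕ) : Set (Fin n) :=
  G.vNhd (VB B) r

/-- The closed `r`-th edge-neighbourhood of a set of vertices: edges within distance `r - 1`. -/
noncomputable def eNhd (G : KGraph n k) (A : Set (Fin n)) (r : ℕ) : Set (Finset (Fin n)) :=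
  {e | e ∈ G.edges ∧ G.setDist (e : Set (Fin n)) A ≤ ((r - 1 : ℕ) : ℕ∞)}

/-- The average vertex degree of `G`. -/
noncomputable def avgDeg (G : KGraph n k) : ℝ :=
  (∑ v : Fin n, ((G.vNhd {v} 1).ncard : ℝ)) / n

/-- A `k`-graph on `n` vertices with average vertex degree `d ≥ k` is `ξ`-expanding if
(A.1) edge-neighbourhoods of vertices are not too large, (A.2) vertex-neighbourhoods of vertex
sets have size comparable to `|A| d^r`, and (A.3) vertex-neighbourhoods of edge sets are large. -/
def IsExpanding (G : KGraph n k) (ξ : ℝ) : Prop :=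
  (k : ℝ) ≤ G.avgDeg ∧
  (∀ v : Fin n, ∀ r : ℕ, 1 ≤ r → G.avgDeg ^ r ≤ Real.sqrt ((n : ℝ) * k) →
    ((G.eNhd {v} r).ncard : ℝ) ≤ ξ⁻¹ * G.avgDeg ^ r / k) ∧
  (∀ A : Set (Fin n), ∀ r : ℕ, 1 ≤ r →
    ξ * min ((A.ncard : ℝ) * G.avgDeg ^ r) (n : ℝ) ≤ ((G.vNhd A r).ncard : ℝ) ∧
    ((G.vNhd A r).ncard : ℝ) ≤ ξ⁻¹ * (A.ncard : ℝ) * G.avgDeg ^ r) ∧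
  (∀ B : Set (Finset (Fin n)), B ⊆ (G.edges : Set (Finset (Fin n))) → ∀ r : ℕ, 1 ≤ r →
    ξ * min ((B.ncard : ℝ) * k * G.avgDeg ^ r) (n : ℝ) ≤ ((G.vNhdE B r).ncard : ℝ))

/-- `CopsWin G c r` : with the cops currently on the vertices `c i`, the robber on `r`, and the
cops to move, the cops have a strategy to catch the robber. Either a cop is already on the
robber's vertex; or the cops can move (each by distance at most 1) so that a cop lands on the
robber; or the cops can move so that whatever the robber's reply, the cops still win. -/
inductive CopsWin (G : KGraph n k) {m : ℕ} : (Fin m → Fin n) → Fin n → Prop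
  | caught (c : Fin m → Fin n) (r : Fin n) (i : Fin m) (h : c i = r) : CopsWin G c r
  | stepCaught (c c' : Fin m → Fin n) (r : Fin n)
      (hmove : ∀ i, G.dist (c i) (c' i) ≤ 1) (i : Fin m) (h : c' i = r) : CopsWin G c r
  | step (c c' : Fin m → Fin n) (r : Fin n)
      (hmove : ∀ i, G.dist (c i) (c' i) ≤ 1)
      (h : ∀ r' : Fin n, G.dist r r' ≤ 1 → CopsWin G c' r') : CopsWin G c r

/-- The cop number of `G` : the least `m` such that `m` cops can be initially placed so as to
catch the robber wherever he starts. -/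
noncomputable def copNumber (G : KGraph n k) : ℕ :=
  sInf {m : ℕ | ∃ c₀ : Fin m → Fin n, ∀ r₀ : Fin n, CopsWin G c₀ r₀}

/-- `G` is connected if all pairs of vertices are at finite distance. -/
def Connected (G : KGraph n k) : Prop := ∀ x y : Fin n, G.dist x y ≠ ⊤

end KGraph

open Classical in
/-- The probability that the binomial random `k`-uniform hypergraph `G^k(n,p)` (each `k`-subset
of `[n]` an edge independently with probability `p`) satisfies the property `Q`. -/
noncomputable def ghProb (n k : ℕ) (p : ℝ) (Q : KGraph n k → Prop) : ℝ :=
  ∑ E ∈ (Finset.powersetCard k (Finset.univ : Finset (Fin n))).powerset,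
    if h : ∀ e ∈ E, e.card = k then
      (if Q ⟨E, h⟩ then
        p ^ E.card * (1 - p) ^ ((Finset.powersetCard k (Finset.univ : Finset (Fin n))).card - E.card)
      else 0)
    else 0

/-!
Write `D = d̂ / k` for the expected number of edges at a vertex. Three kinds of edge set are bad,
and each has probability `O(1 / n)`, by a Chernoff bound and a union bound:
* some vertex has degree more than `2 ^ 11 * D`;
* some `B` with `|B| * d̂ ≤ n` meets fewer than `|B| * D / 8` edges;
* some `S` with `2 ^ 16 * |S| ≤ n` spans more than `12 * |S| / k` edges.

Bounded degrees give the upper bound. For the lower bound, shrink `A` to `B` with `|B| * d̂ ≤ n`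
while keeping at least half of `min (|A| * d̂) n`. The edges that meet `B` all lie inside its
neighbourhood `S`, and there are at least `|B| * D / 8` of them. If `S` is small it spans at most
`12 * |S| / k` edges, so `|B| * d̂ ≤ 96 * |S|`; otherwise `|S|` exceeds `n / 2 ^ 16` anyway.
-/

open Finset Filter MeasureTheory ProbabilityTheory unitInterval

section RandomSubset

variable {α : Type*} [Finite α]

theorem integral_pow_ncard_inter_setBernoulli {u : Set α} {F : Finset α} (hF : ↑F ⊆ u) (p : I)
    (t : ℝ) : ∫ s, t ^ (s ∩ F).ncard ∂setBer(u, p) = (1 + p * (t - 1)) ^ #F := by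
  classical
  have := Fintype.ofFinite α
  have pow_eq_prod (x : α → Prop) :
      t ^ ({i | x i} ∩ (F : Set α)).ncard = ∏ i, if i ∈ F ∧ x i then t else 1 := by
    rw [prod_ite, prod_const, prod_const_one, mul_one, ← Set.ncard_coe_finset]
    congr 2
    ext
    simp [and_comm]
  have integral_coord (i : α) :
      ∫ x : Prop, (if i ∈ F ∧ x then t else 1)
        ∂(toNNReal p • Measure.dirac (i ∈ u) + toNNReal (σ p) • Measure.dirac False)
      = if i ∈ F then 1 + p * (t - 1) else 1 := by
    rw [integral_add_measure .of_finite .of_finite, integral_smul_nnreal_measure,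
      integral_smul_nnreal_measure, integral_dirac, integral_dirac]
    by_cases hi : i ∈ F
    · simp only [hi, hF hi, and_self, if_true, NNReal.smul_def, coe_toNNReal, smul_eq_mul,
        and_false, if_false, coe_symm_eq, mul_one]
      ring
    · simp [hi, NNReal.smul_def]
  rw [setBernoulli_eq_map, integral_map (by fun_prop) .of_discrete, Measure.infinitePi_eq_pi]
  simp only [pow_eq_prod]
  rw [integral_fintype_prod_eq_prod (fun (i : α) (x : Prop) => if i ∈ F ∧ x then t else 1)]
  simp only [integral_coord, prod_ite_mem, univ_inter, prod_const]

theorem mgf_ncard_inter_setBernoulli_le {u : Set α} {F : Finset α} (hF : ↑F ⊆ u) (p : I) (t : ℝ) :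
    mgf (fun s => ((s ∩ F).ncard : ℝ)) setBer(u, p) t ≤ Real.exp (p * #F * (Real.exp t - 1)) := by
  calc mgf (fun s => ((s ∩ F).ncard : ℝ)) setBer(u, p) t
      = ∫ s, Real.exp t ^ (s ∩ F).ncard ∂setBer(u, p) := by
        simp only [mgf, ← Real.exp_nat_mul, mul_comm t]
    _ = (1 + p * (Real.exp t - 1)) ^ #F := integral_pow_ncard_inter_setBernoulli hF p _
    _ ≤ Real.exp (p * (Real.exp t - 1)) ^ #F := by
        refine pow_le_pow_left₀ ?_ (by linarith [Real.add_one_le_exp (p * (Real.exp t - 1))]) _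
        nlinarith [p.2.1, p.2.2, Real.exp_pos t]
    _ = Real.exp (p * #F * (Real.exp t - 1)) := by
        rw [← Real.exp_nat_mul]
        ring_nf

theorem setBernoulli_real_le_ncard_inter {u : Set α} {F : Finset α} (hF : ↑F ⊆ u) (p : I) {t : ℝ}
    (ht : 0 ≤ t) (c : ℝ) :
    setBer(u, p).real {s | c ≤ (s ∩ F).ncard} ≤
      Real.exp (p * #F * (Real.exp t - 1) - t * c) := by
  refine (measure_ge_le_exp_mul_mgf c ht .of_finite).trans ?_
  rw [sub_eq_neg_add, Real.exp_add, ← neg_mul]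
  gcongr
  exact mgf_ncard_inter_setBernoulli_le hF p t

theorem setBernoulli_real_ncard_inter_le {u : Set α} {F : Finset α} (hF : ↑F ⊆ u) (p : I) {t : ℝ}
    (ht : t ≤ 0) (c : ℝ) :
    setBer(u, p).real {s | (s ∩ F).ncard ≤ c} ≤
      Real.exp (p * #F * (Real.exp t - 1) - t * c) := by
  refine (measure_le_le_exp_mul_mgf c ht .of_finite).trans ?_
  rw [sub_eq_neg_add, Real.exp_add, ← neg_mul]
  gcongr
  exact mgf_ncard_inter_setBernoulli_le hF p t

end RandomSubset

section UnionBound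

variable {V : Type*} [Fintype V]

theorem sum_inv_choose_card :
    ∑ A : Finset V, ((Fintype.card V).choose #A : ℝ)⁻¹ = Fintype.card V + 1 := by
  rw [← powerset_univ, sum_powerset_apply_card (fun m => ((Fintype.card V).choose m : ℝ)⁻¹)]
  have term_eq_one : ∀ m ∈ range (Fintype.card V + 1),
      (Fintype.card V).choose m • ((Fintype.card V).choose m : ℝ)⁻¹ = 1 := fun m hm => by
    rw [nsmul_eq_mul, mul_inv_cancel₀]
    exact_mod_cast (Nat.choose_pos (Nat.lt_succ_iff.1 (mem_range.1 hm))).ne'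
  rw [card_univ, sum_congr rfl term_eq_one]
  simp

-- All sets of a given size together get weight `1 / n ^ 2`, so the union over all `2 ^ n` sets
-- costs only a factor `n + 1`.
theorem measureReal_iUnion_finset_le_of_le_inv_choose {n : ℕ} (hV : Fintype.card V = n)
    {Ω : Type*} [MeasurableSpace Ω] {μ : Measure Ω} {B : Finset V → Set Ω}
    (hB : ∀ A, μ.real (B A) ≤ ((n : ℝ) ^ 2 * n.choose #A)⁻¹) :
    μ.real (⋃ A, B A) ≤ (n + 1) / (n : ℝ) ^ 2 := by
  subst hV
  calc μ.real (⋃ A, B A) ≤ ∑ A, μ.real (B A) := measureReal_iUnion_fintype_le B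
    _ ≤ ∑ A : Finset V, ((Fintype.card V : ℝ) ^ 2 * (Fintype.card V).choose #A)⁻¹ :=
        sum_le_sum fun A _ => hB A
    _ = (Fintype.card V + 1) / (Fintype.card V : ℝ) ^ 2 := by
        simp only [mul_inv, ← mul_sum, sum_inv_choose_card]
        ring

end UnionBound

section Binomials

theorem choose_succ_le_add_mul_choose (n k a : ℕ) :
    n.choose (k + 1) ≤ (n - a).choose (k + 1) + a * (n - 1).choose k := by
  induction a with
  | zero => simp
  | succ a ih =>
    have pascal : (n - a).choose (k + 1) ≤ (n - (a + 1)).choose (k + 1) + (n - 1).choose k := by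
      rcases Nat.eq_zero_or_eq_succ_pred (n - a) with h | h
      · simp [h]
      · rw [h, Nat.choose_succ_succ, add_comm, Nat.pred_eq_sub_one, Nat.sub_sub]
        gcongr
        omega
    linarith

theorem mul_choose_add_choose_succ_le {n a : ℕ} (k : ℕ) (ha : a ≤ n) :
    a * (n - a).choose k + (n - a).choose (k + 1) ≤ n.choose (k + 1) := by
  induction a with
  | zero => simp
  | succ a ih =>
    have pascal : (n - a).choose (k + 1) =
        (n - (a + 1)).choose k + (n - (a + 1)).choose (k + 1) := by
      rw [show n - a = n - (a + 1) + 1 by omega, Nat.choose_succ_succ]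
    have mono : a * (n - (a + 1)).choose k ≤ a * (n - a).choose k := by
      gcongr
      omega
    linarith [ih (by omega)]

theorem choose_le_two_mul_choose_sub {n k a : ℕ} (h : 2 * a * k ≤ n) :
    n.choose k ≤ 2 * (n - a).choose k := by
  rcases k with _ | k
  · simp
  rcases n with _ | n
  · simp
  have absorb : (n + 1) * n.choose k = (n + 1).choose (k + 1) * (k + 1) :=
    Nat.add_one_mul_choose_eq n k
  have half : 2 * (a * n.choose k) ≤ (n + 1).choose (k + 1) := by
    refine Nat.le_of_mul_le_mul_left ?_ n.succ_pos
    calc (n + 1) * (2 * (a * n.choose k))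
        = (n + 1).choose (k + 1) * (2 * a * (k + 1)) := by linear_combination 2 * a * absorb
      _ ≤ (n + 1).choose (k + 1) * (n + 1) := by gcongr
      _ = (n + 1) * (n + 1).choose (k + 1) := mul_comm _ _
  have := choose_succ_le_add_mul_choose (n + 1) k a
  simp only [Nat.add_sub_cancel] at this
  omega

theorem choose_mul_pow_le {s n : ℕ} (k : ℕ) (h : s ≤ n) :
    s.choose k * n ^ k ≤ n.choose k * s ^ k := by
  induction k with
  | zero => simp
  | succ k ih =>
    have factor : (s - k) * n ≤ (n - k) * s := by
      rw [Nat.sub_mul, Nat.sub_mul, mul_comm s n]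
      gcongr
    refine Nat.le_of_mul_le_mul_right ?_ k.succ_pos
    calc s.choose (k + 1) * n ^ (k + 1) * (k + 1)
        = s.choose k * n ^ k * ((s - k) * n) := by
          linear_combination n ^ (k + 1) * Nat.choose_succ_right_eq s k
      _ ≤ n.choose k * s ^ k * ((n - k) * s) := by gcongr
      _ = n.choose (k + 1) * s ^ (k + 1) * (k + 1) := by
          linear_combination s ^ (k + 1) * (Nat.choose_succ_right_eq n k).symm

theorem choose_le_exp_mul_one_add_log (n s : ℕ) :
    (n.choose s : ℝ) ≤ Real.exp (s * (1 + Real.log (n / s))) := by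
  rcases eq_or_ne s 0 with rfl | hs
  · simp
  rcases eq_or_ne n 0 with rfl | hn
  · simp [Nat.choose_eq_zero_of_lt (Nat.pos_of_ne_zero hs), Real.exp_nonneg]
  calc (n.choose s : ℝ) ≤ (n : ℝ) ^ s / s.factorial := Nat.choose_le_pow_div s n
    _ = (s : ℝ) ^ s / s.factorial * ((n : ℝ) / s) ^ s := by
        rw [div_pow]
        field_simp
    _ ≤ Real.exp s * ((n : ℝ) / s) ^ s := by
        gcongr
        exact Real.pow_div_factorial_le_exp _ s.cast_nonneg s
    _ = Real.exp (s * (1 + Real.log (n / s))) := by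
        rw [mul_add, mul_one, Real.exp_add, Real.exp_nat_mul, Real.exp_log]
        positivity

theorem exp_le_inv_sq_mul_choose {n s : ℕ} (hn : n ≠ 0) (hs : s ≤ n) {x : ℝ}
    (hx : x + 2 * Real.log n + s * (1 + Real.log (n / s)) ≤ 0) :
    Real.exp x ≤ ((n : ℝ) ^ 2 * n.choose s)⁻¹ := by
  have hn : (0 : ℝ) < n := by positivity
  have choose_pos : (0 : ℝ) < n.choose s := by exact_mod_cast Nat.choose_pos hs
  rw [le_inv_comm₀ (Real.exp_pos x) (by positivity), ← Real.exp_neg]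
  calc (n : ℝ) ^ 2 * n.choose s
      ≤ Real.exp (2 * Real.log n) * Real.exp (s * (1 + Real.log (n / s))) := by
        gcongr
        · exact_mod_cast (Real.exp_log (pow_pos hn 2)).ge.trans_eq (by rw [Real.log_pow]; rfl)
        · exact choose_le_exp_mul_one_add_log n s
    _ = Real.exp (2 * Real.log n + s * (1 + Real.log (n / s))) := (Real.exp_add _ _).symm
    _ ≤ Real.exp (-x) := Real.exp_le_exp.2 (by linarith)

theorem le_mul_choose_pred {n k : ℕ} (hk : 2 ≤ k) (hkn : k ≤ n) :
    n ≤ k * (n - 1).choose (k - 1) := by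
  obtain ⟨j, rfl⟩ := Nat.exists_eq_add_of_le' hk
  obtain ⟨m, rfl⟩ := Nat.exists_eq_add_of_le' (hk.trans hkn)
  have absorb : (m + 1) * m.choose j = (m + 1).choose (j + 1) * (j + 1) :=
    Nat.add_one_mul_choose_eq m j
  have hmj : 1 ≤ m.choose j := Nat.choose_pos (by omega)
  have hC : 1 ≤ (m + 1).choose (j + 1) := Nat.choose_pos (by omega)
  change m + 2 ≤ (j + 2) * (m + 1).choose (j + 1)
  nlinarith

end Binomials

section EdgeSets

variable {V : Type*} [Fintype V] [DecidableEq V]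

/-- The `k`-subsets of `V` that meet `A`, i.e. the potential edges incident with `A`. -/
def kSetsMeeting (k : ℕ) (A : Finset V) : Finset (Finset V) :=
  {e ∈ powersetCard k univ | ∃ x ∈ A, x ∈ e}

theorem mem_kSetsMeeting {k : ℕ} {A e : Finset V} :
    e ∈ kSetsMeeting k A ↔ #e = k ∧ ∃ x ∈ A, x ∈ e := by
  simp [kSetsMeeting]

theorem kSetsMeeting_subset_powersetCard (k : ℕ) (A : Finset V) :
    (kSetsMeeting k A : Set (Finset V)) ⊆ powersetCard k (univ : Finset V) :=
  coe_subset.2 (filter_subset _ _)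

theorem card_kSetsMeeting_add (k : ℕ) (A : Finset V) :
    #(kSetsMeeting k A) + (Fintype.card V - #A).choose k = (Fintype.card V).choose k := by
  have avoiding : {e ∈ powersetCard k (univ : Finset V) | ¬∃ x ∈ A, x ∈ e} = powersetCard k Aᶜ := by
    ext e
    simp only [mem_filter, mem_powersetCard, subset_iff, mem_compl]
    grind
  rw [← card_compl, ← card_powersetCard, ← avoiding, kSetsMeeting, card_filter_add_card_filter_not,
    card_powersetCard, card_univ]

theorem card_kSetsMeeting_singleton (k : ℕ) (v : V) :
    #(kSetsMeeting (k + 1) {v}) = (Fintype.card V - 1).choose k := by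
  have pascal : (Fintype.card V).choose (k + 1) =
      (Fintype.card V - 1).choose k + (Fintype.card V - 1).choose (k + 1) := by
    rw [← Nat.choose_succ_succ', Nat.sub_add_cancel (Fintype.card_pos_iff.2 ⟨v⟩)]
  have := card_kSetsMeeting_add (k + 1) {v}
  rw [card_singleton] at this
  omega

theorem card_mul_choose_le_two_mul_card_kSetsMeeting {k : ℕ} {A : Finset V}
    (h : 2 * #A * k ≤ Fintype.card V) :
    #A * (Fintype.card V - 1).choose k ≤ 2 * #(kSetsMeeting (k + 1) A) := by
  rcases A.eq_empty_or_nonempty with rfl | hA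
  · simp
  have hA : 1 ≤ #A := hA.card_pos
  have avoid_rest : (Fintype.card V - 1).choose k ≤ 2 * (Fintype.card V - #A).choose k := by
    have := choose_le_two_mul_choose_sub (n := Fintype.card V - 1) (k := k) (a := #A - 1) <| by
      rcases k with _ | k
      · simp
      · zify [hA, hA.trans (card_le_univ A)] at h ⊢
        nlinarith
    rwa [Nat.sub_sub, Nat.add_sub_cancel' hA] at this
  have meet_once := mul_choose_add_choose_succ_le k (card_le_univ A)
  have total := card_kSetsMeeting_add (k + 1) A
  nlinarith

end EdgeSets

namespace KGraph

variable {n k : ℕ} (G : KGraph n k)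

theorem dist_le_one_iff {x v : Fin n} :
    G.dist x v ≤ 1 ↔ x = v ∨ ∃ e ∈ G.edges, x ∈ e ∧ v ∈ e := by
  rcases eq_or_ne x v with rfl | hxv
  · simp [dist]
  simp only [dist, hxv, if_false, false_or]
  constructor
  · intro h
    obtain ⟨_, ⟨l, ⟨hne, hedges, hhead, hlast, -⟩, rfl⟩, hlt⟩ :=
      sInf_lt_iff.1 (h.trans_lt (by norm_num : (1 : ℕ∞) < 2))
    have hlen : l.length < 2 := Nat.cast_lt.1 hlt
    obtain ⟨e, rfl⟩ : ∃ e, l = [e] := by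
      have := List.length_pos_iff.2 hne
      exact List.length_eq_one_iff.1 (by omega)
    exact ⟨e, by simpa using hedges, by simpa using hhead, by simpa using hlast⟩
  · rintro ⟨e, he, hx, hv⟩
    refine sInf_le ⟨[e], ⟨by simp, by simpa using he, by simpa using hx, by simpa using hv, ?_⟩,
      by simp⟩
    exact List.isChain_singleton e

theorem mem_vNhd_iff {A : Set (Fin n)} {r : ℕ} {v : Fin n} :
    v ∈ G.vNhd A r ↔ ∃ x ∈ A, G.dist x v ≤ r := by
  simp only [vNhd, setDist, Set.mem_ofPred_eq, Set.mem_singleton_iff, iInf_iInf_eq_left]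
  refine ⟨fun h => ?_, fun ⟨x, hx, h⟩ => (iInf₂_le x hx).trans h⟩
  have lt_succ : (⨅ x ∈ A, G.dist x v) < (r + 1 : ℕ) :=
    h.trans_lt (by exact_mod_cast r.lt_succ_self)
  simp only [iInf_lt_iff] at lt_succ
  obtain ⟨x, hx, hlt⟩ := lt_succ
  exact ⟨x, hx, Order.le_of_lt_add_one (by exact_mod_cast hlt)⟩

theorem vNhd_mono {A B : Set (Fin n)} (h : A ⊆ B) (r : ℕ) : G.vNhd A r ⊆ G.vNhd B r := by
  intro v hv
  obtain ⟨x, hx, hd⟩ := G.mem_vNhd_iff.1 hv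
  exact G.mem_vNhd_iff.2 ⟨x, h hx, hd⟩

theorem ncard_vNhd_one_le (A : Finset (Fin n)) :
    (G.vNhd A 1).ncard ≤ ∑ x ∈ A, (#(G.edges ∩ kSetsMeeting k {x}) * k + 1) := by
  let star (x : Fin n) : Finset (Fin n) := insert x ((G.edges ∩ kSetsMeeting k {x}).biUnion id)
  have card_star_le (x : Fin n) : #(star x) ≤ #(G.edges ∩ kSetsMeeting k {x}) * k + 1 :=
    (card_insert_le _ _).trans <| by
      gcongr
      exact card_biUnion_le_card_mul _ _ _ fun e he => (G.uniform e (mem_inter.1 he).1).le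
  have vNhd_subset : G.vNhd A 1 ⊆ A.biUnion star := by
    intro v hv
    obtain ⟨x, hx, hdist⟩ := G.mem_vNhd_iff.1 hv
    simp only [mem_coe, mem_biUnion]
    refine ⟨x, hx, ?_⟩
    rcases G.dist_le_one_iff.1 (by exact_mod_cast hdist) with rfl | ⟨e, he, hxe, hve⟩
    · exact mem_insert_self x _
    · refine mem_insert_of_mem (mem_biUnion.2 ⟨e, mem_inter.2 ⟨he, ?_⟩, hve⟩)
      exact mem_kSetsMeeting.2 ⟨G.uniform e he, x, mem_singleton_self x, hxe⟩
  calc (G.vNhd A 1).ncard ≤ #(A.biUnion star) := by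
        rw [← Set.ncard_coe_finset]
        exact Set.ncard_le_ncard vNhd_subset
    _ ≤ ∑ x ∈ A, #(star x) := card_biUnion_le
    _ ≤ ∑ x ∈ A, (#(G.edges ∩ kSetsMeeting k {x}) * k + 1) := sum_le_sum fun x _ => card_star_le x

theorem edges_inter_kSetsMeeting_subset {A S : Finset (Fin n)} (hS : G.vNhd A 1 ⊆ S) :
    G.edges ∩ kSetsMeeting k A ⊆ G.edges ∩ powersetCard k S := by
  intro e he
  obtain ⟨heG, heA⟩ := mem_inter.1 he
  obtain ⟨hcard, x, hx, hxe⟩ := mem_kSetsMeeting.1 heA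
  refine mem_inter.2 ⟨heG, mem_powersetCard.2 ⟨fun v hv => hS ?_, hcard⟩⟩
  refine G.mem_vNhd_iff.2 ⟨x, hx, ?_⟩
  exact_mod_cast G.dist_le_one_iff.2 (.inr ⟨e, heG, hxe, hv⟩)

end KGraph

theorem exists_subset_card_mul_le {V : Type*} (A : Finset V) {d N : ℝ} (hd : 0 < d) (hdN : d ≤ N) :
    ∃ B ⊆ A, #B * d ≤ N ∧ min (#A * d) N ≤ 2 * (#B * d) := by
  rcases le_or_gt (#A * d) N with h | h
  · refine ⟨A, Subset.rfl, h, (min_le_left _ _).trans ?_⟩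
    linarith [mul_nonneg (#A).cast_nonneg hd.le]
  have hq : (⌊N / d⌋₊ : ℝ) * d ≤ N :=
    (le_div_iff₀ hd).1 (Nat.floor_le (div_nonneg (hd.le.trans hdN) hd.le))
  have hq' : N < (⌊N / d⌋₊ + 1) * d := (div_lt_iff₀ hd).1 (Nat.lt_floor_add_one _)
  have one_le : (1 : ℝ) ≤ ⌊N / d⌋₊ := by
    exact_mod_cast Nat.le_floor (by rwa [Nat.cast_one, one_le_div hd])
  have le_card : ⌊N / d⌋₊ ≤ #A := by
    have := lt_of_mul_lt_mul_right (hq.trans_lt h) hd.le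
    exact_mod_cast this.le
  obtain ⟨B, hBA, hB⟩ := exists_subset_card_eq le_card
  refine ⟨B, hBA, by rwa [hB], (min_le_right _ _).trans ?_⟩
  rw [hB]
  nlinarith

namespace KGraph

variable {n k : ℕ} (G : KGraph n k)

theorem ncard_vNhd_one_le_of_degree_le {D : ℝ} (hkD : 1 ≤ k * D)
    (degree_le : ∀ v, (#(G.edges ∩ kSetsMeeting k {v}) : ℝ) ≤ 2 ^ 11 * D) (A : Finset (Fin n)) :
    ((G.vNhd A 1).ncard : ℝ) ≤ 2 ^ 12 * #A * (k * D) := by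
  calc ((G.vNhd A 1).ncard : ℝ)
      ≤ ∑ x ∈ A, ((#(G.edges ∩ kSetsMeeting k {x}) : ℝ) * k + 1) := by
        exact_mod_cast G.ncard_vNhd_one_le A
    _ ≤ ∑ x ∈ A, 2 ^ 12 * (k * D) := by
        refine sum_le_sum fun x _ => ?_
        have := mul_le_mul_of_nonneg_right (degree_le x) k.cast_nonneg
        linarith
    _ = 2 ^ 12 * #A * (k * D) := by
        rw [sum_const, nsmul_eq_mul]
        ring

theorem le_ncard_vNhd_one {D : ℝ} (hkD : 0 < k * D) (hkDn : k * D ≤ n)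
    (many_meeting : ∀ A : Finset (Fin n), #A * (k * D) ≤ n →
      #A * D / 8 ≤ #(G.edges ∩ kSetsMeeting k A))
    (few_inside : ∀ S : Finset (Fin n), (2 ^ 16 * #S : ℝ) ≤ n →
      (k * #(G.edges ∩ powersetCard k S) : ℝ) ≤ 12 * #S) (A : Finset (Fin n)) :
    2 ^ (-16 : ℤ) * min (#A * (k * D)) n ≤ ((G.vNhd A 1).ncard : ℝ) := by
  obtain ⟨B, hBA, hBn, hmin⟩ := exists_subset_card_mul_le A hkD hkDn
  obtain ⟨S, hS⟩ := (Set.toFinite (G.vNhd B 1)).exists_finset_coe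
  have card_S_le : (#S : ℝ) ≤ (G.vNhd A 1).ncard := by
    rw [← Set.ncard_coe_finset, hS]
    exact_mod_cast Set.ncard_le_ncard (G.vNhd_mono (coe_subset.2 hBA) 1)
  refine le_trans ?_ card_S_le
  rw [show (2 : ℝ) ^ (-16 : ℤ) = 1 / 2 ^ 16 by norm_num]
  rcases le_or_gt (n : ℝ) (2 ^ 16 * #S) with h | h
  · linarith [min_le_right ((#A : ℝ) * (k * D)) n]
  have : (#B * (k * D) : ℝ) ≤ 96 * #S := by
    calc (#B * (k * D) : ℝ) = 8 * (k * (#B * D / 8)) := by ring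
      _ ≤ 8 * (k * #(G.edges ∩ kSetsMeeting k B)) := by
          gcongr
          exact many_meeting B hBn
      _ ≤ 8 * (k * #(G.edges ∩ powersetCard k S)) := by
          gcongr 8 * (k * (Nat.cast ?_))
          exact card_le_card (G.edges_inter_kSetsMeeting_subset hS.ge)
      _ ≤ 96 * #S := by linarith [few_inside S h.le]
  linarith

end KGraph

section RandomHypergraph

/-- The law of the edge set of `G^k(n,p)`, as a random set of `k`-subsets of `Fin n`. -/
noncomputable abbrev edgeLaw (n k : ℕ) (p : I) : Measure (Set (Finset (Fin n))) :=
  setBer(↑(powersetCard k (univ : Finset (Fin n))), p)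

theorem ghProb_eq_edgeLaw_real {n k : ℕ} (p : I) (Q : KGraph n k → Prop) :
    ghProb n k p Q = (edgeLaw n k p).real {E | ∃ G : KGraph n k, ↑G.edges = E ∧ Q G} := by
  classical
  set u := powersetCard k (univ : Finset (Fin n)) with u_def
  have uniform_of_mem {E} (hE : E ∈ u.powerset) : ∀ e ∈ E, #e = k := fun e he =>
    (mem_powersetCard.1 (mem_powerset.1 hE he)).2
  have decompose : {E | ∃ G : KGraph n k, ↑G.edges = E ∧ Q G} =
      ⋃ E ∈ {E ∈ u.powerset | ∃ h, Q ⟨E, h⟩}, {(E : Set (Finset (Fin n)))} := by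
    ext E
    simp only [Set.mem_ofPred_eq, Set.mem_iUnion, Set.mem_singleton_iff, mem_filter, mem_powerset]
    constructor
    · rintro ⟨G, rfl, hG⟩
      exact ⟨G.edges, ⟨fun e he => mem_powersetCard.2 ⟨subset_univ e, G.uniform e he⟩,
        G.uniform, hG⟩, rfl⟩
    · rintro ⟨E, ⟨-, h, hQ⟩, rfl⟩
      exact ⟨⟨E, h⟩, rfl, hQ⟩
  rw [decompose, measureReal_biUnion_finset (fun E _ F _ hEF => by simpa using hEF)
    (fun _ _ => .of_discrete), sum_filter, ghProb]
  refine sum_congr rfl fun E hE => ?_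
  have hEu := mem_powerset.1 hE
  rw [setBernoulli_real_singleton p (coe_subset.2 hEu) u.finite_toSet, Set.ncard_coe_finset,
    ← coe_sdiff, Set.ncard_coe_finset, card_sdiff_of_subset hEu]
  simp only [dif_pos (uniform_of_mem hE), exists_prop_of_true (uniform_of_mem hE), u_def]

theorem ghProb_le_one {n k : ℕ} (p : I) (Q : KGraph n k → Prop) : ghProb n k p Q ≤ 1 := by
  rw [ghProb_eq_edgeLaw_real]
  exact measureReal_le_one

theorem one_sub_le_ghProb {n k : ℕ} {p : I} {Q : KGraph n k → Prop}
    {B : Set (Set (Finset (Fin n)))} (hB : ∀ G : KGraph n k, ↑G.edges ∉ B → Q G) :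
    1 - (edgeLaw n k p).real B ≤ ghProb n k p Q := by
  rw [ghProb_eq_edgeLaw_real, ← probReal_compl_eq_one_sub .of_discrete]
  refine ENNReal.toReal_mono (by finiteness) (measure_mono_ae ?_)
  filter_upwards [setBernoulli_ae_subset] with E hE hEB
  obtain ⟨F, rfl⟩ := E.toFinite.exists_finset_coe
  have uniform : ∀ e ∈ F, #e = k := fun e he => (mem_powersetCard.1 (hE he)).2
  exact ⟨⟨F, uniform⟩, rfl, hB ⟨F, uniform⟩ hEB⟩

/-- The expected degree of a vertex of `G^k(n,p)`; the `d̂` of the paper is `k` times this. -/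
noncomputable def expectedDegree (n k : ℕ) (p : ℝ) : ℝ :=
  p * (n - 1).choose (k - 1)

/-- Edge sets in which some vertex has degree more than `2 ^ 11 * D`. -/
def crowdedVertex (n k : ℕ) (D : ℝ) : Set (Set (Finset (Fin n))) :=
  {E | ∃ v : Fin n, 2 ^ 11 * D < (E ∩ kSetsMeeting k {v}).ncard}

/-- Edge sets in which some vertex set `A` with `#A * k * D ≤ n` meets fewer than `#A * D / 8`
edges. -/
def sparselyMetSet (n k : ℕ) (D : ℝ) : Set (Set (Finset (Fin n))) :=
  {E | ∃ A : Finset (Fin n), #A * (k * D) ≤ n ∧ (E ∩ kSetsMeeting k A).ncard < #A * D / 8}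

/-- Edge sets in which some vertex set `S` with `2 ^ 16 * #S ≤ n` spans more than `12 * #S / k`
edges. -/
def denselySpannedSet (n k : ℕ) : Set (Set (Finset (Fin n))) :=
  {E | ∃ S : Finset (Fin n), (2 ^ 16 * #S : ℝ) ≤ n ∧
    (12 * #S : ℝ) < k * (E ∩ powersetCard k S).ncard}

theorem expectedDegree_eq_mul_card {n k : ℕ} (hk : k ≠ 0) (p : ℝ) (v : Fin n) :
    expectedDegree n k p = p * #(kSetsMeeting k {v}) := by
  obtain ⟨j, rfl⟩ := Nat.exists_eq_add_one_of_ne_zero hk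
  rw [card_kSetsMeeting_singleton, Fintype.card_fin, expectedDegree, Nat.add_sub_cancel]

theorem card_mul_expectedDegree_div_two_le {n k : ℕ} (hk : k ≠ 0) {p : ℝ} (hp : 0 ≤ p)
    {A : Finset (Fin n)} (hA : 2 * #A * k ≤ n) :
    #A * expectedDegree n k p / 2 ≤ p * #(kSetsMeeting k A) := by
  obtain ⟨j, rfl⟩ := Nat.exists_eq_add_one_of_ne_zero hk
  have count : #A * (n - 1).choose j ≤ 2 * #(kSetsMeeting (j + 1) A) := by
    have := card_mul_choose_le_two_mul_card_kSetsMeeting (k := j) (A := A)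
    rw [Fintype.card_fin] at this
    exact this (le_trans (by gcongr; exact j.le_succ) hA)
  calc #A * expectedDegree n (j + 1) p / 2
      = p * (#A * (n - 1).choose j : ℕ) / 2 := by
        rw [expectedDegree, Nat.add_sub_cancel]
        push_cast
        ring
    _ ≤ p * (2 * #(kSetsMeeting (j + 1) A) : ℕ) / 2 := by gcongr
    _ = p * #(kSetsMeeting (j + 1) A) := by
        push_cast
        ring

variable {n k : ℕ} {p : I}

theorem edgeLaw_real_crowdedVertex_le (hk : k ≠ 0) (hD : Real.log n ≤ expectedDegree n k p) :
    (edgeLaw n k p).real (crowdedVertex n k (expectedDegree n k p)) ≤ (n : ℝ)⁻¹ := by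
  set D := expectedDegree n k p with D_def
  have crowded_le (v : Fin n) :
      (edgeLaw n k p).real {E | 2 ^ 11 * D < (E ∩ kSetsMeeting k {v}).ncard} ≤
        ((n : ℝ) ^ 2)⁻¹ := by
    have hn : (0 : ℝ) < n := by exact_mod_cast v.pos
    have D_nonneg : 0 ≤ D := mul_nonneg p.2.1 (Nat.cast_nonneg _)
    calc (edgeLaw n k p).real {E | 2 ^ 11 * D < (E ∩ kSetsMeeting k {v}).ncard}
        ≤ (edgeLaw n k p).real {E | 2 ^ 11 * D ≤ (E ∩ kSetsMeeting k {v}).ncard} :=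
          measureReal_mono (Set.ofPred_subset_ofPred.2 fun _ => le_of_lt)
      _ ≤ Real.exp (D * (Real.exp 1 - 1) - 1 * (2 ^ 11 * D)) := by
          rw [D_def, expectedDegree_eq_mul_card hk p v]
          exact setBernoulli_real_le_ncard_inter (kSetsMeeting_subset_powersetCard k {v}) p
            zero_le_one _
      _ ≤ Real.exp (-Real.log (n ^ 2)) := by
          rw [Real.log_pow]
          gcongr
          push_cast
          nlinarith [Real.exp_one_lt_three]
      _ = ((n : ℝ) ^ 2)⁻¹ := by rw [Real.exp_neg, Real.exp_log (by positivity)]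
  calc (edgeLaw n k p).real (crowdedVertex n k D)
      ≤ ∑ v : Fin n, (edgeLaw n k p).real {E | 2 ^ 11 * D < (E ∩ kSetsMeeting k {v}).ncard} := by
        rw [crowdedVertex, Set.ofPred_exists]
        exact measureReal_iUnion_fintype_le _
    _ ≤ ∑ _v : Fin n, ((n : ℝ) ^ 2)⁻¹ := sum_le_sum fun v _ => crowded_le v
    _ = (n : ℝ)⁻¹ := by
        rw [sum_const, card_univ, Fintype.card_fin, nsmul_eq_mul, ← div_eq_mul_inv, sq,
          div_self_mul_self']

theorem edgeLaw_real_sparselyMet_le {A : Finset (Fin n)} (hn : 1 ≤ Real.log n) (hk : k ≠ 0)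
    (hD : 24 * Real.log n ≤ expectedDegree n k p) (hA : #A * (k * expectedDegree n k p) ≤ n) :
    (edgeLaw n k p).real {E | (E ∩ kSetsMeeting k A).ncard < #A * expectedDegree n k p / 8} ≤
      ((n : ℝ) ^ 2 * n.choose #A)⁻¹ := by
  set D := expectedDegree n k p with D_def
  have hn0 : n ≠ 0 := by
    rintro rfl
    norm_num at hn
  rcases A.eq_empty_or_nonempty with rfl | hA_nonempty
  · simp [(Nat.cast_nonneg _).not_gt]
  have card_A_pos : (1 : ℝ) ≤ #A := by exact_mod_cast hA_nonempty.card_pos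
  have small : 2 * #A * k ≤ n := by
    have : (#A * (k * 2) : ℝ) ≤ #A * (k * D) := by
      gcongr
      linarith
    have : (2 * #A * k : ℝ) ≤ n := by linarith
    exact_mod_cast this
  have mean : #A * D / 2 ≤ p * #(kSetsMeeting k A) :=
    card_mul_expectedDegree_div_two_le hk p.2.1 small
  have log_div_le : Real.log (n / #A) ≤ Real.log n :=
    Real.log_le_log (by positivity) (div_le_self n.cast_nonneg card_A_pos)
  calc (edgeLaw n k p).real {E | (E ∩ kSetsMeeting k A).ncard < #A * D / 8}
      ≤ (edgeLaw n k p).real {E | (E ∩ kSetsMeeting k A).ncard ≤ #A * D / 8} :=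
        measureReal_mono (Set.ofPred_subset_ofPred.2 fun _ => le_of_lt)
    _ ≤ Real.exp (p * #(kSetsMeeting k A) * (Real.exp (-1) - 1) - -1 * (#A * D / 8)) :=
        setBernoulli_real_ncard_inter_le (kSetsMeeting_subset_powersetCard k A) p (by norm_num) _
    _ ≤ Real.exp (-(#A * (4 * Real.log n))) := by
        gcongr
        have AD_ge : #A * (24 * Real.log n) ≤ #A * D := by gcongr
        have AD_pos : 0 < #A * D := by nlinarith
        nlinarith [Real.exp_neg_one_lt_d9]
    _ ≤ ((n : ℝ) ^ 2 * n.choose #A)⁻¹ := by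
        refine exp_le_inv_sq_mul_choose hn0 (by simpa using card_le_univ A) ?_
        nlinarith

theorem edgeLaw_real_sparselyMetSet_le (hn : 1 ≤ Real.log n) (hk : k ≠ 0)
    (hD : 24 * Real.log n ≤ expectedDegree n k p) :
    (edgeLaw n k p).real (sparselyMetSet n k (expectedDegree n k p)) ≤ (n + 1) / (n : ℝ) ^ 2 := by
  rw [sparselyMetSet, Set.ofPred_exists]
  refine measureReal_iUnion_finset_le_of_le_inv_choose (Fintype.card_fin n) fun A => ?_
  by_cases hA : #A * (k * expectedDegree n k p) ≤ n
  · simpa [hA] using edgeLaw_real_sparselyMet_le hn hk hD hA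
  · simp only [hA, false_and, Set.ofPred_false, measureReal_empty]
    positivity

theorem mul_choose_le_sq {p : ℝ} (hp : 0 ≤ p) (hk : k ≠ 0)
    (hDn : k * expectedDegree n k p ≤ n) : p * n.choose k ≤ (n : ℝ) ^ 2 := by
  rcases eq_or_ne n 0 with rfl | hn
  · simp [Nat.choose_eq_zero_of_lt (Nat.pos_of_ne_zero hk)]
  have hk1 : (1 : ℝ) ≤ k := by exact_mod_cast Nat.pos_of_ne_zero hk
  have absorb : (n * (n - 1).choose (k - 1) : ℝ) = n.choose k * k := by
    obtain ⟨m, rfl⟩ := Nat.exists_eq_add_one_of_ne_zero hn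
    obtain ⟨j, rfl⟩ := Nat.exists_eq_add_one_of_ne_zero hk
    exact_mod_cast Nat.add_one_mul_choose_eq m j
  calc p * n.choose k ≤ p * (n.choose k * k) * k := by
        rw [← mul_assoc, mul_assoc]
        exact le_mul_of_one_le_right (by positivity) (one_le_mul_of_one_le_of_one_le hk1 hk1)
    _ = n * (k * expectedDegree n k p) := by
        rw [← absorb, expectedDegree]
        ring
    _ ≤ (n : ℝ) ^ 2 := by
        rw [sq]
        gcongr

-- `C(s, k) ≤ (s / n) ^ k * C(n, k)`, so the `k`-subsets of an `s`-set contain at most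
-- `(s / n) ^ k * n ^ 2` edges on average. Half of the decay pays for the exponential, and since
-- `k ≥ log n` the other half absorbs `n ^ 2`.
theorem mul_choose_mul_exp_le_one {p : ℝ} (hp : 0 ≤ p) (hk0 : k ≠ 0) (hk : Real.log n ≤ k)
    (hDn : k * expectedDegree n k p ≤ n) {s : ℕ} (hs : s ≠ 0) (hsn : s ≤ n)
    (hl : 4 ≤ Real.log (n / s)) :
    p * s.choose k * Real.exp (k * (Real.log (n / s) / 2)) ≤ 1 := by
  have hs0 : (0 : ℝ) < s := by positivity
  have hn0 : (0 : ℝ) < n := hs0.trans_le (by exact_mod_cast hsn)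
  have shrink : (s.choose k * n ^ k : ℝ) ≤ n.choose k * s ^ k := by
    exact_mod_cast choose_mul_pow_le k hsn
  set l := Real.log (n / s) with l_def
  have exp_half : Real.exp (k * (l / 2)) =
      (n : ℝ) ^ k / (s : ℝ) ^ k * Real.exp (-(k * (l / 2))) := by
    rw [← div_pow, ← Real.exp_log (div_pos hn0 hs0), ← l_def, ← Real.exp_nat_mul, ← Real.exp_add]
    ring_nf
  calc p * s.choose k * Real.exp (k * (l / 2))
      = p * (s.choose k * n ^ k / s ^ k) * Real.exp (-(k * (l / 2))) := by
        rw [exp_half]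
        ring
    _ ≤ p * n.choose k * Real.exp (-(k * (l / 2))) := by
        gcongr
        rwa [div_le_iff₀ (by positivity)]
    _ ≤ Real.exp (Real.log (n ^ 2)) * Real.exp (-(k * (l / 2))) := by
        rw [Real.exp_log (by positivity)]
        gcongr
        exact mul_choose_le_sq hp hk0 hDn
    _ ≤ 1 := by
        rw [← Real.exp_add, Real.exp_le_one_iff, Real.log_pow]
        push_cast
        nlinarith

theorem eleven_le_log_div {n s : ℕ} (hs : s ≠ 0) (h : (2 ^ 16 * s : ℝ) ≤ n) :
    11 ≤ Real.log (n / s) := by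
  have hs0 : (0 : ℝ) < s := by positivity
  calc (11 : ℝ) ≤ 16 * Real.log 2 := by linarith [Real.log_two_gt_d9]
    _ = Real.log (2 ^ 16) := by
        rw [Real.log_pow]
        norm_num
    _ ≤ Real.log (n / s) := Real.log_le_log (by norm_num) ((le_div_iff₀ hs0).2 h)

theorem edgeLaw_real_lt_mul_ncard_inter_powersetCard_le (hk : k ≠ 0) (S : Finset (Fin n)) {t : ℝ}
    (ht : 0 ≤ t) (c : ℝ) :
    (edgeLaw n k p).real {E | c < k * (E ∩ powersetCard k S).ncard} ≤
      Real.exp (p * (#S).choose k * Real.exp (k * t) - t * c) := by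
  have hk0 : (0 : ℝ) < k := by positivity
  have powersetCard_subset : (powersetCard k S : Set (Finset (Fin n))) ⊆
      powersetCard k (univ : Finset (Fin n)) := coe_subset.2 (powersetCard_mono (subset_univ S))
  have mean_nonneg : 0 ≤ (p : ℝ) * (#S).choose k := mul_nonneg p.2.1 (Nat.cast_nonneg _)
  calc (edgeLaw n k p).real {E | c < k * (E ∩ powersetCard k S).ncard}
      ≤ (edgeLaw n k p).real {E | c / k ≤ (E ∩ powersetCard k S).ncard} :=
        measureReal_mono (Set.ofPred_subset_ofPred.2 fun _ h => (div_le_iff₀' hk0).2 h.le)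
    _ ≤ Real.exp (p * #(powersetCard k S) * (Real.exp (k * t) - 1) - k * t * (c / k)) :=
        setBernoulli_real_le_ncard_inter powersetCard_subset p (by positivity) _
    _ ≤ Real.exp (p * (#S).choose k * Real.exp (k * t) - t * c) := by
        have cancel : k * t * (c / k) = t * c := by field_simp
        rw [card_powersetCard, cancel]
        gcongr
        linarith

theorem edgeLaw_real_denselySpanned_le {S : Finset (Fin n)} (hk0 : k ≠ 0)
    (hk : Real.log n ≤ k) (hDn : k * expectedDegree n k p ≤ n) (hS : (2 ^ 16 * #S : ℝ) ≤ n) :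
    (edgeLaw n k p).real {E | (12 * #S : ℝ) < k * (E ∩ powersetCard k S).ncard} ≤
      ((n : ℝ) ^ 2 * n.choose #S)⁻¹ := by
  rcases lt_or_ge #S k with hSk | hkS
  · have not_dense (E : Set (Finset (Fin n))) :
        ¬(12 * #S : ℝ) < k * (E ∩ powersetCard k S).ncard := by
      simp [powersetCard_eq_empty.2 hSk]
    simp only [not_dense, Set.ofPred_false, measureReal_empty]
    positivity
  have card_S_ne_zero : #S ≠ 0 := by omega
  have card_S_le : #S ≤ n := by simpa using card_le_univ S
  have log_le_card_S : Real.log n ≤ #S := hk.trans (by exact_mod_cast hkS)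
  have hl := eleven_le_log_div card_S_ne_zero hS
  set l := Real.log (n / #S)
  calc (edgeLaw n k p).real {E | (12 * #S : ℝ) < k * (E ∩ powersetCard k S).ncard}
      ≤ Real.exp (p * (#S).choose k * Real.exp (k * (l / 2)) - l / 2 * (12 * #S)) :=
        edgeLaw_real_lt_mul_ncard_inter_powersetCard_le hk0 S (by positivity) _
    _ ≤ Real.exp (1 - l / 2 * (12 * #S)) := by
        gcongr
        exact mul_choose_mul_exp_le_one p.2.1 hk0 hk hDn card_S_ne_zero card_S_le (by linarith)
    _ ≤ ((n : ℝ) ^ 2 * n.choose #S)⁻¹ := by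
        refine exp_le_inv_sq_mul_choose (by omega) card_S_le ?_
        have one_le_card_S : (1 : ℝ) ≤ #S := by exact_mod_cast Nat.pos_of_ne_zero card_S_ne_zero
        nlinarith

theorem edgeLaw_real_denselySpannedSet_le (hk0 : k ≠ 0) (hk : Real.log n ≤ k)
    (hDn : k * expectedDegree n k p ≤ n) :
    (edgeLaw n k p).real (denselySpannedSet n k) ≤ (n + 1) / (n : ℝ) ^ 2 := by
  rw [denselySpannedSet, Set.ofPred_exists]
  refine measureReal_iUnion_finset_le_of_le_inv_choose (Fintype.card_fin n) fun S => ?_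
  by_cases hS : (2 ^ 16 * #S : ℝ) ≤ n
  · simpa [hS] using edgeLaw_real_denselySpanned_le hk0 hk hDn hS
  · simp only [hS, false_and, Set.ofPred_false, measureReal_empty]
    positivity

end RandomHypergraph

theorem KGraph.ncard_vNhd_one_bounds {n k : ℕ} {D : ℝ} (hkD : 1 ≤ k * D) (hkDn : k * D ≤ n)
    (G : KGraph n k)
    (hG : ↑G.edges ∉ crowdedVertex n k D ∪ sparselyMetSet n k D ∪ denselySpannedSet n k)
    (A : Finset (Fin n)) :
    2 ^ (-16 : ℤ) * min (#A * (k * D)) n ≤ ((G.vNhd A 1).ncard : ℝ) ∧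
      ((G.vNhd A 1).ncard : ℝ) ≤ 2 ^ 12 * #A * (k * D) := by
  simp only [crowdedVertex, sparselyMetSet, denselySpannedSet, Set.mem_union, Set.mem_ofPred_eq,
    not_or, not_exists, not_and, not_lt, ← coe_inter, Set.ncard_coe_finset] at hG
  obtain ⟨⟨degree_le, many_meeting⟩, few_inside⟩ := hG
  exact ⟨G.le_ncard_vNhd_one (by linarith) hkDn many_meeting few_inside A,
    G.ncard_vNhd_one_le_of_degree_le hkD degree_le A⟩

theorem mem_unitInterval_of_mul_expectedDegree_le {n k : ℕ} {p : ℝ} (hk : 2 ≤ k)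
    (hD : 0 < expectedDegree n k p) (hkD : k * expectedDegree n k p ≤ n) : p ∈ I := by
  have hp : 0 < p := pos_of_mul_pos_left hD (Nat.cast_nonneg _)
  have choose_pos : (0 : ℝ) < (n - 1).choose (k - 1) := pos_of_mul_pos_right hD hp.le
  have hkn : k - 1 ≤ n - 1 := Nat.choose_ne_zero_iff.1 (Nat.cast_pos.1 choose_pos).ne'
  have le_mul_choose : (n : ℝ) ≤ k * (n - 1).choose (k - 1) := by
    exact_mod_cast le_mul_choose_pred hk (by omega)
  have mul_choose_pos : (0 : ℝ) < k * (n - 1).choose (k - 1) := by positivity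
  refine ⟨hp.le, le_of_mul_le_mul_right ?_ mul_choose_pos⟩
  rw [expectedDegree] at hkD
  linarith

theorem edgeLaw_real_bad_le {n k : ℕ} {p : I} (hn : 1 ≤ Real.log n) (hk : Real.log n ≤ k)
    (hD : 24 * Real.log n ≤ expectedDegree n k p) (hkD : k * expectedDegree n k p ≤ n) :
    (edgeLaw n k p).real (crowdedVertex n k (expectedDegree n k p) ∪
      sparselyMetSet n k (expectedDegree n k p) ∪ denselySpannedSet n k) ≤ 5 / n := by
  have hk0 : k ≠ 0 := by
    have : (0 : ℝ) < k := by linarith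
    exact_mod_cast this.ne'
  have one_le : (1 : ℝ) ≤ n := by linarith [Real.log_le_self n.cast_nonneg]
  calc _ ≤ (edgeLaw n k p).real (crowdedVertex n k (expectedDegree n k p)) +
        (edgeLaw n k p).real (sparselyMetSet n k (expectedDegree n k p)) +
        (edgeLaw n k p).real (denselySpannedSet n k) :=
        (measureReal_union_le _ _).trans (by gcongr; exact measureReal_union_le _ _)
    _ ≤ (n : ℝ)⁻¹ + (n + 1) / (n : ℝ) ^ 2 + (n + 1) / (n : ℝ) ^ 2 := by
        gcongr
        · exact edgeLaw_real_crowdedVertex_le hk0 (by linarith)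
        · exact edgeLaw_real_sparselyMetSet_le hn hk0 hD
        · exact edgeLaw_real_denselySpannedSet_le hk0 hk hkD
    _ ≤ 5 / n := by
        field_simp
        linarith

theorem ghProb_vNhd_bounds_mem_Icc {n k : ℕ} {p : ℝ} (hn : 2 ≤ Real.log n)
    (hk : Real.log n ≤ k) (hD : 24 * Real.log n ≤ expectedDegree n k p)
    (hkD : k * expectedDegree n k p ≤ n) :
    (ghProb n k p fun G => ∀ A : Finset (Fin n),
      2 ^ (-16 : ℤ) * min (#A * (k * expectedDegree n k p)) n ≤ ((G.vNhd A 1).ncard : ℝ) ∧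
        ((G.vNhd A 1).ncard : ℝ) ≤ 2 ^ 12 * #A * (k * expectedDegree n k p)) ∈
      Set.Icc (1 - 5 / (n : ℝ)) 1 := by
  have hk2 : 2 ≤ k := by exact_mod_cast hn.trans hk
  lift p to I using mem_unitInterval_of_mul_expectedDegree_le hk2 (by linarith) hkD
  have one_le : 1 ≤ k * expectedDegree n k p := by nlinarith
  refine ⟨?_, ghProb_le_one p _⟩
  calc 1 - 5 / (n : ℝ) ≤ 1 - _ :=
        sub_le_sub_left (edgeLaw_real_bad_le (by linarith) hk hD hkD) 1
    _ ≤ _ := one_sub_le_ghProb fun G => G.ncard_vNhd_one_bounds one_le hkD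

theorem eventually_mul_log_le_of_tendsto_div_pow {f : ℕ → ℝ} {m : ℕ} (hm : m ≠ 0)
    (hf : Tendsto (fun n => f n / Real.log n ^ m) atTop atTop) (C : ℝ) :
    ∀ᶠ n : ℕ in atTop, C * Real.log n ≤ f n := by
  have log_tendsto := Real.tendsto_log_atTop.comp tendsto_natCast_atTop_atTop
  filter_upwards [hf.eventually_ge_atTop (max C 0), log_tendsto.eventually_ge_atTop 1] with n hfn hn
  have hn : 1 ≤ Real.log n := hn
  rw [le_div_iff₀ (by positivity)] at hfn
  calc C * Real.log n ≤ max C 0 * Real.log n ^ m := by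
        gcongr
        · exact le_max_left C 0
        · exact le_self_pow₀ hn hm
    _ ≤ f n := hfn

theorem whp_Gknp_vertex_neighbourhood_bounds_general (k : ℕ → ℕ) (p : ℕ → ℝ)
    (hd : ∀ᶠ n : ℕ in atTop, 24 * Real.log n ≤ p n * (n - 1).choose (k n - 1))
    (hk : ∀ᶠ n : ℕ in atTop, Real.log n ≤ k n)
    (hdn : ∀ᶠ n : ℕ in atTop, p n * k n * (n - 1).choose (k n - 1) ≤ n) :
    Tendsto
      (fun n => ghProb n (k n) (p n) fun G => ∀ A : Finset (Fin n),
        2 ^ (-16 : ℤ) * min (#A * (p n * k n * (n - 1).choose (k n - 1))) n ≤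
            ((G.vNhd A 1).ncard : ℝ) ∧
          ((G.vNhd A 1).ncard : ℝ) ≤ 2 ^ 12 * #A * (p n * k n * (n - 1).choose (k n - 1)))
      atTop (nhds 1) := by
  have dHat_eq (n : ℕ) : p n * k n * (n - 1).choose (k n - 1) =
      k n * expectedDegree n (k n) (p n) := by
    rw [expectedDegree]
    ring
  simp only [dHat_eq] at hdn ⊢
  have lower_tendsto : Tendsto (fun n : ℕ => 1 - 5 / (n : ℝ)) atTop (nhds 1) := by
    simpa using tendsto_const_nhds.sub (tendsto_const_div_atTop_nhds_zero_nat (5 : ℝ))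
  have log_ge : ∀ᶠ n : ℕ in atTop, 2 ≤ Real.log n :=
    (Real.tendsto_log_atTop.comp tendsto_natCast_atTop_atTop).eventually_ge_atTop 2
  have bounds := log_ge.and (hk.and (hd.and hdn)) |>.mono fun n ⟨hn, hk, hd, hdn⟩ =>
    ghProb_vNhd_bounds_mem_Icc hn hk hd hdn
  exact tendsto_of_tendsto_of_tendsto_of_le_of_le' lower_tendsto tendsto_const_nhds
    (bounds.mono fun _ h => h.1) (bounds.mono fun _ h => h.2)

/-- whp first vertex-neighbourhoods in `G^k(n,p)` have size of order `|A| d̂`. -/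
theorem whp_Gknp_vertex_neighbourhood_bounds (k : ℕ → ℕ) (p : ℕ → ℝ)
    (hk2 : ∀ n, 2 ≤ k n) (hp : ∀ n, 0 < p n)
    (hd : Filter.Tendsto
      (fun n => p n * (((n - 1).choose (k n - 1) : ℕ) : ℝ) / Real.log n ^ 3)
      Filter.atTop Filter.atTop)
    (hk : Filter.Tendsto (fun n => (k n : ℝ) / Real.log n) Filter.atTop Filter.atTop)
    (hdn : ∀ᶠ n in Filter.atTop,
      p n * k n * (((n - 1).choose (k n - 1) : ℕ) : ℝ) ≤ (n : ℝ)) :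
    Filter.Tendsto
      (fun n => ghProb n (k n) (p n) (fun G =>
        ∀ A : Finset (Fin n),
          (2 : ℝ) ^ (-16 : ℤ) *
              min ((A.card : ℝ) * (p n * k n * (((n - 1).choose (k n - 1) : ℕ) : ℝ))) (n : ℝ)
            ≤ ((G.vNhd ↑A 1).ncard : ℝ) ∧
          ((G.vNhd ↑A 1).ncard : ℝ) ≤
            (2 : ℝ) ^ (12 : ℕ) * A.card *
              (p n * k n * (((n - 1).choose (k n - 1) : ℕ) : ℝ))))
      Filter.atTop (nhds 1) := by
  have log_le_k : ∀ᶠ n : ℕ in atTop, 1 * Real.log n ≤ k n :=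
    eventually_mul_log_le_of_tendsto_div_pow one_ne_zero (by simpa only [pow_one] using hk) 1
  exact whp_Gknp_vertex_neighbourhood_bounds_general k p
    (eventually_mul_log_le_of_tendsto_div_pow three_ne_zero hd 24)
    (by simpa only [one_mul] using log_le_k) hdn
end

section
/- Let d̂ = d̂(n) be a sequence with d̂ = ω(log⁴ n). Then for all sufficiently large n the following holds: for all a ≤ n and r ∈ ℕ such that a·d̂^r ≤ n/(2·log n), setting ε_0 = 0 and ε_i = 5/(log n − log(2·a·d̂^i)) for 1 ≤ i ≤ r, one has ∏_{j=0}^{r} (1 − ε_j) ≥ 2^{-4}. -/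
open scoped BigOperators

/-!
Write `L = log (log x)`. Since `log d ≥ κ L`, the condition `a * d ^ r ≤ x / log x` keeps the
denominator of `ε_i` above `L * (1 + κ * (r - i))`, so that `∑ ε_i` is at most `c / L` times a
harmonic-type sum of size about `(log r) / κ`. The same condition forces `r ≤ log x`, that is
`log r ≤ L`, hence `∑ ε_i ≤ c / κ + o(1)`. As every `ε_i` is `o(1)` too, the product `∏ (1 - ε_i)`
is at least `exp (-c / κ) - o(1)`; for `c = 5` and `κ = 4` this is above `2⁻⁴`.
-/

section

open Finset Filter Real
open scoped Topology

variable {a c d x δ κ : ℝ} {r : ℕ}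

lemma exp_neg_div_one_sub_le (hx : 0 ≤ x) (hxδ : x ≤ δ) (hδ : δ < 1) :
    exp (-(x / (1 - δ))) ≤ 1 - x := by
  have hpos : 0 < 1 - x := by linarith
  have hlog : 1 - (1 - x)⁻¹ ≤ log (1 - x) := one_sub_inv_le_log_of_pos hpos
  have hdiv : x / (1 - x) ≤ x / (1 - δ) := by gcongr
  have heq : 1 - (1 - x)⁻¹ = -(x / (1 - x)) := by field_simp; ring
  rw [← le_log_iff_exp_le hpos]
  linarith

lemma exp_neg_sum_div_one_sub_le_prod {ι : Type*} {s : Finset ι} {ε : ι → ℝ}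
    (hε : ∀ i ∈ s, 0 ≤ ε i) (hεδ : ∀ i ∈ s, ε i ≤ δ) (hδ : δ < 1) :
    exp (-((∑ i ∈ s, ε i) / (1 - δ))) ≤ ∏ i ∈ s, (1 - ε i) := by
  rw [sum_div, ← sum_neg_distrib, exp_sum]
  exact prod_le_prod (fun _ _ ↦ (exp_pos _).le) fun i hi ↦
    exp_neg_div_one_sub_le (hε i hi) (hεδ i hi) hδ

lemma sum_inv_one_add_mul_le_one_add_harmonic_div (hκ : 0 < κ) (n : ℕ) :
    ∑ j ∈ range (n + 1), (1 + κ * j)⁻¹ ≤ 1 + (harmonic n : ℝ) / κ := by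
  induction n with
  | zero => simp
  | succ n ih =>
    have hterm : (1 + κ * (n + 1 : ℕ))⁻¹ ≤ (κ * (n + 1 : ℕ))⁻¹ := by
      gcongr
      linarith
    rw [sum_range_succ, harmonic_succ]
    calc
      _ ≤ 1 + (harmonic n : ℝ) / κ + (κ * (n + 1 : ℕ))⁻¹ := add_le_add ih hterm
      _ = _ := by push_cast; field_simp; ring

lemma sum_inv_one_add_mul_le_one_add_log_div (hκ : 0 < κ) (n : ℕ) :
    ∑ j ∈ range (n + 1), (1 + κ * j)⁻¹ ≤ 1 + (1 + log n) / κ :=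
  (sum_inv_one_add_mul_le_one_add_harmonic_div hκ n).trans <| by
    gcongr
    exact harmonic_le_one_add_log n

lemma exp_neg_le_prod_one_sub_of_le_div {L : ℝ} {ε : ℕ → ℝ} (hκ : 0 < κ) (hc : 0 ≤ c)
    (hcL : c < L) (hr : log r ≤ L) (hε : ∀ i ≤ r, 0 ≤ ε i)
    (hε_le : ∀ i ≤ r, ε i ≤ c / (L * (1 + κ * (r - i : ℕ)))) :
    exp (-(c / κ * (1 + (κ + 1 + c) / (L - c)))) ≤ ∏ i ∈ range (r + 1), (1 - ε i) := by
  have hL : 0 < L := hc.trans_lt hcL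
  have hδ : c / L < 1 := (div_lt_one hL).2 hcL
  have hεδ : ∀ i ≤ r, ε i ≤ c / L := fun i hi ↦ (hε_le i hi).trans <| by
    gcongr
    exact le_mul_of_one_le_right hL.le (le_add_of_nonneg_right (by positivity))
  have hsum : ∑ i ∈ range (r + 1), ε i ≤ c / L * (1 + (1 + L) / κ) := calc
    _ ≤ ∑ i ∈ range (r + 1), c / L * (1 + κ * (r - i : ℕ))⁻¹ := by
      refine sum_le_sum fun i hi ↦ (hε_le i (mem_range_succ_iff.1 hi)).trans_eq ?_
      rw [← div_div, div_eq_mul_inv (c / L)]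
    _ = c / L * ∑ j ∈ range (r + 1), (1 + κ * j)⁻¹ := by
      rw [← mul_sum, sum_flip fun j ↦ (1 + κ * (j : ℝ))⁻¹]
    _ ≤ c / L * (1 + (1 + log r) / κ) := by
      gcongr
      exact sum_inv_one_add_mul_le_one_add_log_div hκ r
    _ ≤ c / L * (1 + (1 + L) / κ) := by gcongr
  have hlim : c / L * (1 + (1 + L) / κ) / (1 - c / L) = c / κ * (1 + (κ + 1 + c) / (L - c)) := by
    have hLc : L - c ≠ 0 := (sub_pos.2 hcL).ne'
    field_simp
    ring
  refine le_trans ?_ <| exp_neg_sum_div_one_sub_le_prod (fun i hi ↦ hε i (mem_range_succ_iff.1 hi))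
    (fun i hi ↦ hεδ i (mem_range_succ_iff.1 hi)) hδ
  rw [← hlim]
  gcongr

lemma log_log_mul_le_log_sub_log {i : ℕ} (hi : i ≤ r) (hx : 1 < x) (ha : 0 < a) (hd : 0 < d)
    (hκ : κ * log (log x) ≤ log d) (h : a * d ^ r ≤ x / log x) :
    log (log x) * (1 + κ * (r - i : ℕ)) ≤ log x - log (a * d ^ i) := by
  have hlog : log (a * d ^ r) ≤ log x - log (log x) := by
    rw [← log_div (by positivity) (log_pos hx).ne']
    exact log_le_log (by positivity) h
  have hsplit : log (a * d ^ r) = log (a * d ^ i) + (r - i : ℕ) * log d := by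
    rw [← log_pow, ← log_mul (by positivity) (by positivity), mul_assoc, ← pow_add,
      Nat.add_sub_cancel' hi]
  have hmul : (r - i : ℕ) * (κ * log (log x)) ≤ (r - i : ℕ) * log d := by gcongr
  linarith

lemma log_natCast_le_log_log (hx : 1 < x) (ha : 1 ≤ a) (hd : 0 < d)
    (hκ : κ * log (log x) ≤ log d) (h : a * d ^ r ≤ x / log x) (hL : 0 ≤ log (log x))
    (hκL : 1 ≤ κ * log (log x)) : log r ≤ log (log x) := by
  rcases r.eq_zero_or_pos with rfl | hr
  · simpa using hL
  have hbound : log (log x) * (1 + κ * r) ≤ log x - log a := by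
    simpa using log_log_mul_le_log_sub_log r.zero_le hx (one_pos.trans_le ha) hd hκ h
  have hmul : (r : ℝ) ≤ κ * log (log x) * r := le_mul_of_one_le_left r.cast_nonneg hκL
  refine log_le_log (Nat.cast_pos.2 hr) ?_
  linarith [log_nonneg ha]

/-- The sequence `ε_i` for the pair `x`, `d` in place of `n`, `d̂(n)`, with a general numerator `c`
(originally `5`); the multiplier `a` of `d ^ i` plays the part of the original `2 * a`. -/
noncomputable def eps (c x a d : ℝ) (i : ℕ) : ℝ :=
  if i = 0 then 0 else c / (log x - log (a * d ^ i))

lemma exp_neg_le_prod_one_sub_eps (hc : 0 ≤ c) (hκ : 0 < κ) (hx : 1 < x)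
    (hcL : c < log (log x)) (hκL : 1 ≤ κ * log (log x)) (ha : 1 ≤ a) (hd : log x ^ κ ≤ d)
    (h : a * d ^ r ≤ x / log x) :
    exp (-(c / κ * (1 + (κ + 1 + c) / (log (log x) - c)))) ≤
      ∏ i ∈ range (r + 1), (1 - eps c x a d i) := by
  have hlog : 0 < log x := log_pos hx
  have hL : 0 < log (log x) := hc.trans_lt hcL
  have hd_pos : 0 < d := (rpow_pos_of_pos hlog κ).trans_le hd
  have hκd : κ * log (log x) ≤ log d := by
    rw [← log_rpow hlog]
    exact log_le_log (by positivity) hd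
  have hden {i : ℕ} (hi : i ≤ r) :
      log (log x) * (1 + κ * (r - i : ℕ)) ≤ log x - log (a * d ^ i) :=
    log_log_mul_le_log_sub_log hi hx (one_pos.trans_le ha) hd_pos hκd h
  have hden_pos (i : ℕ) : 0 < log (log x) * (1 + κ * (r - i : ℕ)) := by positivity
  refine exp_neg_le_prod_one_sub_of_le_div hκ hc hcL
    (log_natCast_le_log_log hx ha hd_pos hκd h hL.le hκL) (fun i hi ↦ ?_) (fun i hi ↦ ?_)
  · unfold eps
    split_ifs
    exacts [le_rfl, div_nonneg hc ((hden_pos i).le.trans (hden hi))]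
  · unfold eps
    split_ifs
    exacts [div_nonneg hc (hden_pos i).le, div_le_div_of_nonneg_left hc (hden_pos i) (hden hi)]

lemma tendsto_exp_neg_mul_one_add_div_sub (b c q : ℝ) :
    Tendsto (fun L ↦ exp (-(q * (1 + b / (L - c))))) atTop (𝓝 (exp (-q))) := by
  have hdiv : Tendsto (fun L ↦ b / (L - c)) atTop (𝓝 0) :=
    (tendsto_atTop_add_const_right _ (-c) tendsto_id).const_div_atTop b
  simpa using (((hdiv.const_add 1).const_mul q).neg).rexp

theorem prod_one_sub_eps_ge_general {B : ℝ} (hc : 0 ≤ c) (hκ : 0 < κ) (hB : B < exp (-(c / κ))) :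
    ∀ᶠ x in atTop, ∀ (d a : ℝ) (r : ℕ), log x ^ κ ≤ d → 1 ≤ a → a * d ^ r ≤ x / log x →
      B ≤ ∏ i ∈ range (r + 1), (1 - eps c x a d i) := by
  have hL : Tendsto (fun x ↦ log (log x)) atTop atTop := tendsto_log_atTop.comp tendsto_log_atTop
  filter_upwards [eventually_gt_atTop 1, hL.eventually_gt_atTop c, hL.eventually_ge_atTop κ⁻¹,
    hL.eventually <| (tendsto_exp_neg_mul_one_add_div_sub (κ + 1 + c) c (c / κ)).eventually_const_lt
      hB] with x hx hcL hκL hBx d a r hd ha h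
  exact hBx.le.trans <|
    exp_neg_le_prod_one_sub_eps hc hκ hx hcL ((inv_le_iff_one_le_mul₀' hκ).1 hκL) ha hd h

lemma eventually_le_of_tendsto_div_atTop {α : Type*} {l : Filter α} {f g : α → ℝ}
    (hg : ∀ᶠ n in l, 0 ≤ g n) (hfg : Tendsto (fun n ↦ f n / g n) l atTop) :
    ∀ᶠ n in l, g n ≤ f n := by
  filter_upwards [hg, hfg.eventually_gt_atTop 1] with n hn h
  contrapose! h
  exact div_le_one_of_le₀ h.le hn

lemma inv_two_pow_four_lt_exp_neg_five_div_four : (2 : ℝ)⁻¹ ^ 4 < exp (-(5 / 4)) := by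
  rw [← log_lt_iff_lt_exp (by positivity), log_pow, log_inv]
  norm_num
  linarith [log_two_gt_d9]

end

/-- the product `∏ (1 - ε_j)` is at least `2⁻⁴`. -/
theorem prod_one_sub_eps_ge (dhat : ℕ → ℝ) (hpos : ∀ n, 0 < dhat n)
    (homega : Filter.Tendsto (fun n => dhat n / Real.log n ^ 4) Filter.atTop Filter.atTop) :
    ∀ᶠ n in Filter.atTop, ∀ a r : ℕ, 1 ≤ a → 1 ≤ r → a ≤ n →
      (a : ℝ) * dhat n ^ r ≤ (n : ℝ) / (2 * Real.log n) →
      (2 : ℝ)⁻¹ ^ 4 ≤ ∏ i ∈ Finset.range (r + 1),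
        (1 - if i = 0 then 0 else 5 / (Real.log n - Real.log (2 * a * dhat n ^ i))) := by
  have hd := eventually_le_of_tendsto_div_atTop (.of_forall fun n ↦ by positivity) homega
  filter_upwards [hd, tendsto_natCast_atTop_atTop.eventually <| prod_one_sub_eps_ge_general
    (by norm_num) (by norm_num) inv_two_pow_four_lt_exp_neg_five_div_four] with n hd hn a r ha _ _ h
  exact hn (dhat n) (2 * a) r (mod_cast hd) (by norm_cast; lia)
    (by rw [mul_comm 2 (Real.log n), ← div_div] at h; linarith)
end

section
/- Let G be a connected k-graph, let j ∈ ℕ, and suppose Y ⊆ V(G) is a set of vertices such that for every vertex v ∈ V(G) there exists an injection f : N_V^{j−1}(v) → Y with dist(x, f(x)) ≤ j for every x ∈ N_V^{j−1}(v). Then the cop number of G satisfies c(G) ≤ |Y|: the cops starting on the vertices of Y can catch the robber. -/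
open scoped BigOperators

/-!
Fix the robber's first vertex `v`. Within `j - 1` moves he cannot leave the ball `N` of radius
`j - 1` around `v`. Let `f : N → Y` be the injection given for `v`. For each `x` in `N`, the cop who
starts on `f x` heads for `x`; as `f` is injective, no cop receives two orders. After `j` cop moves
the cops occupy all of `N`, while the robber has only moved `j - 1` times and hence stands on a
vertex of `N`.
-/

namespace KGraph

variable {n k : ℕ} (G : KGraph n k)

section LoosePath

variable {G} {x y : Fin n}

lemma IsLoosePath.reverse {l : List (Finset (Fin n))} (h : G.IsLoosePath x y l) :
    G.IsLoosePath y x l.reverse := by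
  obtain ⟨hne, hedge, hx, hy, hchain⟩ := h
  refine ⟨by simpa using hne, by simpa using hedge, by simpa using hy, by simpa using hx, ?_⟩
  exact List.isChain_reverse.2 (hchain.imp fun e f hef => by rwa [Finset.inter_comm])

lemma isLoosePath_append {l₁ l₂ : List (Finset (Fin n))} (h₁ : l₁ ≠ []) (h₂ : l₂ ≠ []) :
    G.IsLoosePath x y (l₁ ++ l₂) ↔ ∃ z, G.IsLoosePath x z l₁ ∧ G.IsLoosePath z y l₂ := by
  simp only [IsLoosePath, List.mem_append, List.head?_append_of_ne_nil l₁ h₁,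
    List.getLast?_append_of_ne_nil l₁ h₂]
  constructor
  · rintro ⟨-, hedge, hx, hy, hchain⟩
    obtain ⟨hchain₁, hchain₂, hmeet⟩ := List.isChain_append.1 hchain
    obtain ⟨z, hz⟩ := hmeet _ (List.getLast_mem_getLast? h₁) _ (List.head_mem_head? h₂)
    rw [Finset.mem_inter] at hz
    exact ⟨z,
      ⟨h₁, fun e he => hedge e (.inl he), hx,
        by simpa [List.getLast?_eq_some_getLast h₁] using hz.1, hchain₁⟩,
      ⟨h₂, fun e he => hedge e (.inr he),
        by simpa [List.head?_eq_some_head h₂] using hz.2, hy, hchain₂⟩⟩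
  · rintro ⟨z, ⟨-, hedge₁, hx, hz₁, hchain₁⟩, -, hedge₂, hz₂, hy, hchain₂⟩
    exact ⟨List.append_ne_nil_of_left_ne_nil h₁ l₂, fun e he => he.elim (hedge₁ e) (hedge₂ e),
      hx, hy, List.isChain_append.2 ⟨hchain₁, hchain₂,
        fun e he f hf => ⟨z, Finset.mem_inter.2 ⟨hz₁ e he, hz₂ f hf⟩⟩⟩⟩

end LoosePath

section Dist

variable {x y : Fin n}

lemma dist_self (x : Fin n) : G.dist x x = 0 :=
  if_pos rfl

variable {G} in
lemma IsLoosePath.dist_le {l : List (Finset (Fin n))} (h : G.IsLoosePath x y l) :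
    G.dist x y ≤ l.length := by
  rw [dist]
  split_ifs
  · exact zero_le
  · exact sInf_le ⟨l, h, rfl⟩

lemma dist_le_natCast_iff {t : ℕ} :
    G.dist x y ≤ t ↔ x = y ∨ ∃ l, G.IsLoosePath x y l ∧ l.length ≤ t := by
  constructor
  · intro h
    rw [← ENat.lt_add_one_iff (ENat.natCast_ne_top t), dist] at h
    split_ifs at h with hxy
    · exact .inl hxy
    · obtain ⟨_, ⟨l, hl, rfl⟩, hlt⟩ := sInf_lt_iff.1 h
      exact .inr ⟨l, hl, Nat.cast_le.1 ((ENat.lt_add_one_iff (ENat.natCast_ne_top t)).1 hlt)⟩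
  · rintro (rfl | ⟨l, hl, hlt⟩)
    · simp [dist_self]
    · exact hl.dist_le.trans (mod_cast hlt)

lemma dist_comm (x y : Fin n) : G.dist x y = G.dist y x := by
  suffices h : ∀ x y, G.dist x y ≤ G.dist y x from (h x y).antisymm (h y x)
  intro x y
  rcases eq_or_ne y x with rfl | hne
  · rfl
  · conv_rhs => rw [dist, if_neg hne]
    refine le_sInf ?_
    rintro _ ⟨l, hl, rfl⟩
    simpa using hl.reverse.dist_le

lemma dist_triangle (x y z : Fin n) : G.dist x z ≤ G.dist x y + G.dist y z := by
  rcases eq_or_ne (G.dist x y) ⊤ with hs | hs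
  · simp [hs]
  rcases eq_or_ne (G.dist y z) ⊤ with ht | ht
  · simp [ht]
  obtain ⟨s, hs⟩ := ENat.ne_top_iff_exists.1 hs
  obtain ⟨t, ht⟩ := ENat.ne_top_iff_exists.1 ht
  obtain rfl | ⟨l₁, hl₁, hl₁s⟩ := G.dist_le_natCast_iff.1 hs.ge
  · exact le_add_self
  obtain rfl | ⟨l₂, hl₂, hl₂t⟩ := G.dist_le_natCast_iff.1 ht.ge
  · exact le_self_add
  calc G.dist x z ≤ (l₁ ++ l₂).length :=
        ((isLoosePath_append hl₁.1 hl₂.1).2 ⟨y, hl₁, hl₂⟩).dist_le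
    _ ≤ s + t := by exact_mod_cast (List.length_append.trans_le (add_le_add hl₁s hl₂t))
    _ = G.dist x y + G.dist y z := by rw [hs, ht]

lemma exists_dist_le_of_dist_le_add {s t : ℕ} (h : G.dist x y ≤ s + t) :
    ∃ z, G.dist x z ≤ s ∧ G.dist z y ≤ t := by
  rw [← Nat.cast_add] at h
  obtain rfl | ⟨l, hl, hlen⟩ := G.dist_le_natCast_iff.1 h
  · exact ⟨x, by simp [dist_self], by simp [dist_self]⟩
  rcases Nat.eq_zero_or_pos s with rfl | hs
  · exact ⟨x, by simp [dist_self], by simpa using h⟩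
  rcases le_or_gt l.length s with hls | hls
  · exact ⟨y, hl.dist_le.trans (mod_cast hls), by simp [dist_self]⟩
  have htake : l.take s ≠ [] := List.ne_nil_of_length_pos (by rw [List.length_take]; omega)
  have hdrop : l.drop s ≠ [] := List.ne_nil_of_length_pos (by rw [List.length_drop]; omega)
  rw [← List.take_append_drop s l, isLoosePath_append htake hdrop] at hl
  obtain ⟨z, hxz, hzy⟩ := hl
  refine ⟨z, hxz.dist_le.trans ?_, hzy.dist_le.trans ?_⟩
  · exact_mod_cast List.length_take_le s l
  · rw [List.length_drop]
    exact_mod_cast Nat.sub_le_iff_le_add'.2 hlen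

lemma mem_vNhd_singleton {r : ℕ} : y ∈ G.vNhd {x} r ↔ G.dist x y ≤ r := by
  simp [vNhd, setDist]

lemma vNhd_singleton_subset {r s : ℕ} (h : G.dist x y ≤ s) :
    G.vNhd {y} r ⊆ G.vNhd {x} (r + s) := by
  intro z hz
  rw [mem_vNhd_singleton] at hz ⊢
  calc G.dist x z ≤ G.dist x y + G.dist y z := G.dist_triangle x y z
    _ ≤ s + r := add_le_add h hz
    _ = (r + s : ℕ) := by rw [Nat.cast_add, add_comm]

end Dist

section CopsAndRobber

variable {m : ℕ}

/- The induction is on the number `r` of moves left to the robber; the invariant is that every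
vertex he can still reach is the target of a cop at most `r + 1` moves away from it. -/
lemma copsWin_of_vNhd_subset_range {c target : Fin m → Fin n} {v : Fin n} {r : ℕ}
    (hdist : ∀ i, G.dist (c i) (target i) ≤ r + 1)
    (hcover : G.vNhd {v} r ⊆ Set.range target) : CopsWin G c v := by
  induction r generalizing c v with
  | zero =>
    obtain ⟨i, hi⟩ := hcover (G.mem_vNhd_singleton.2 (G.dist_self v).le)
    exact .stepCaught c target v (by simpa using hdist) i hi
  | succ r ih =>
    have hmove : ∀ i, ∃ z, G.dist (c i) z ≤ (1 : ℕ) ∧ G.dist z (target i) ≤ (r + 1 : ℕ) :=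
      fun i => G.exists_dist_le_of_dist_le_add ((hdist i).trans (add_comm _ _).le)
    choose c' hstep hdist' using hmove
    exact .step c c' v (by simpa using hstep) fun v' hv' =>
      ih hdist' ((G.vNhd_singleton_subset (mod_cast hv')).trans hcover)

lemma copsWin_of_injective {c : Fin m → Fin n} {v : Fin n} {r : ℕ} {f : G.vNhd {v} r → Fin m}
    (hf : Function.Injective f) (hdist : ∀ x : G.vNhd {v} r, G.dist x (c (f x)) ≤ r + 1) :
    CopsWin G c v := by
  refine G.copsWin_of_vNhd_subset_range (target := Function.extend f Subtype.val c) (fun i => ?_)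
    fun x hx => ⟨f ⟨x, hx⟩, hf.extend_apply _ _ _⟩
  by_cases hi : ∃ x, f x = i
  · obtain ⟨x, rfl⟩ := hi
    rw [hf.extend_apply, dist_comm]
    exact hdist x
  · simp [Function.extend_apply' _ _ _ hi, dist_self]

lemma copNumber_le {c : Fin m → Fin n} (hc : ∀ v, CopsWin G c v) : G.copNumber ≤ m :=
  Nat.sInf_le ⟨c, hc⟩

end CopsAndRobber

end KGraph

theorem cop_number_le_of_vertex_injections_general (n k : ℕ) (G : KGraph n k)
    (j : ℕ) (hj : 1 ≤ j) (Y : Finset (Fin n))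
    (hY : ∀ v : Fin n, ∃ f : G.vNhd {v} (j - 1) → (Y : Set (Fin n)),
      Function.Injective f ∧ ∀ x, G.dist x.1 (f x).1 ≤ (j : ℕ∞)) :
    (∃ c₀ : Fin Y.card → Fin n, (∀ i, c₀ i ∈ Y) ∧ ∀ r₀ : Fin n, KGraph.CopsWin G c₀ r₀) ∧
      G.copNumber ≤ Y.card := by
  obtain ⟨r, rfl⟩ := Nat.exists_eq_add_of_le' hj
  let c₀ : Fin Y.card → Fin n := fun i => Y.equivFin.symm i
  have hwin : ∀ v, KGraph.CopsWin G c₀ v := by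
    intro v
    obtain ⟨f, hf, hdist⟩ := hY v
    refine G.copsWin_of_injective (Y.equivFin.injective.comp hf) ?_
    simpa [c₀] using hdist
  exact ⟨⟨c₀, fun i => (Y.equivFin.symm i).2, hwin⟩, G.copNumber_le hwin⟩

/-- if every `(j-1)`-st vertex-neighbourhood admits an injection into `Y` moving
each vertex distance at most `j`, then cops starting on `Y` catch the robber, so `c(G) ≤ |Y|`. -/
theorem cop_number_le_of_vertex_injections (n k : ℕ) (G : KGraph n k) (hconn : G.Connected)
    (j : ℕ) (hj : 1 ≤ j) (Y : Finset (Fin n))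
    (hY : ∀ v : Fin n, ∃ f : G.vNhd {v} (j - 1) → (Y : Set (Fin n)),
      Function.Injective f ∧ ∀ x, G.dist x.1 (f x).1 ≤ (j : ℕ∞)) :
    (∃ c₀ : Fin Y.card → Fin n, (∀ i, c₀ i ∈ Y) ∧ ∀ r₀ : Fin n, KGraph.CopsWin G c₀ r₀) ∧
      G.copNumber ≤ Y.card :=
  cop_number_le_of_vertex_injections_general n k G j hj Y hY
end
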